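/- arXiv:2301.00300 — 3 statements merged into one kernel-verified Lean document; each statement's English description precedes it below -/
import Mathlib

section
/- For every real number k > 1, the family γ ↦ (2ℕ)^{−kγ} is summable over the set M of all multi-indices; that is, ∑_{γ∈M} ∏_{j≥1} (2j)^{−k·γ(j)} < ∞. (Zhang's lemma.) -/
/-!
Summing `∏_i x_i ^ γ(i)` over all finitely supported `γ` multiplies out the product of the geometric
series `∑_n x_i ^ n = 1 + b_i`, where `b_i = x_i / (1 - x_i)`. A finite partial sum involves only
finitely many indices and exponents, so for `0 ≤ x_i < 1` it is at most a finite product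
`∏ (1 + b_i) ≤ exp (∑ b_i)`, and `∑ b_i` converges as soon as `∑ x_i` does. Zhang's lemma is the
case `x_j = (2j)^{-k}`.
-/

open scoped BigOperators

/-- A multi-index: a finitely supported function `ℕ₊ → ℕ`. -/
abbrev MultiIndex := ℕ+ →₀ ℕ

/-- For a multi-index `γ` and a real number `c`,
`(2ℕ)^{cγ} = ∏_j (2j)^{c·γ(j)}` (a finite product over the support of `γ`). -/
noncomputable def twoNpow (c : ℝ) (γ : MultiIndex) : ℝ :=
  γ.prod fun j n => (2 * (j : ℝ)) ^ (c * (n : ℝ))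

section FinsuppProd

variable {ι M : Type*} [Zero M]

lemma sum_finsupp_prod_eq_prod_sum {R : Type*} [CommSemiring R] {f : ι → M → R} {s : Finset ι}
    (hf : ∀ i ∈ s, f i 0 = 1) (t : ι → Finset M) :
    ∑ γ ∈ s.finsupp t, γ.prod f = ∏ i ∈ s, ∑ m ∈ t i, f i m := by
  classical
  rw [Finset.prod_sum, Finset.finsupp, Finset.sum_map]
  refine Finset.sum_congr (by congr!) fun p _ => ?_
  rw [Function.Embedding.coeFn_mk,
    Finsupp.prod_of_support_subset _ (Finsupp.support_indicator_subset s p) _ hf,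
    ← Finset.prod_attach]
  exact Finset.prod_congr rfl fun i _ => by rw [Finsupp.indicator_of_mem i.2]

lemma exists_subset_finsupp (S : Finset (ι →₀ M)) :
    ∃ (s : Finset ι) (t : ι → Finset M), S ⊆ s.finsupp t := by
  classical
  refine ⟨S.biUnion Finsupp.support, fun i => S.image (· i), fun γ hγ => ?_⟩
  exact Finset.mem_finsupp_iff.mpr ⟨Finset.subset_biUnion_of_mem Finsupp.support hγ,
    fun i _ => Finset.mem_image_of_mem (· i) hγ⟩

lemma summable_norm_finsupp_prod {R : Type*} [NormedCommRing R] [NormOneClass R]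
    {f : ι → M → R} {b : ι → ℝ} (hf_zero : ∀ i, f i 0 = 1)
    (hf : ∀ i (t : Finset M), ∑ m ∈ t, ‖f i m‖ ≤ 1 + b i) (hb : Summable b) :
    Summable fun γ : ι →₀ M => ‖γ.prod f‖ := by
  have norm_zero_eq_one (i : ι) : ‖f i 0‖ = 1 := by rw [hf_zero i, norm_one]
  have b_nonneg (i : ι) : 0 ≤ b i := by simpa [norm_zero_eq_one] using hf i {0}
  refine summable_of_sum_le (c := Real.exp (∑' i, b i)) (fun _ => norm_nonneg _) fun S => ?_
  obtain ⟨s, t, hS⟩ := exists_subset_finsupp S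
  calc ∑ γ ∈ S, ‖γ.prod f‖
      ≤ ∑ γ ∈ s.finsupp t, ‖γ.prod f‖ :=
        Finset.sum_le_sum_of_subset_of_nonneg hS fun _ _ _ => norm_nonneg _
    _ ≤ ∑ γ ∈ s.finsupp t, γ.prod fun i m => ‖f i m‖ :=
        Finset.sum_le_sum fun γ _ => Finset.norm_prod_le γ.support fun i => f i (γ i)
    _ = ∏ i ∈ s, ∑ m ∈ t i, ‖f i m‖ :=
        sum_finsupp_prod_eq_prod_sum (fun i _ => norm_zero_eq_one i) t
    _ ≤ ∏ i ∈ s, (1 + b i) :=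
        Finset.prod_le_prod (fun i _ => Finset.sum_nonneg fun m _ => norm_nonneg (f i m))
          fun i _ => hf i (t i)
    _ ≤ Real.exp (∑ i ∈ s, b i) := Real.prod_one_add_le_exp_sum s b_nonneg
    _ ≤ Real.exp (∑' i, b i) := Real.exp_le_exp.mpr (hb.sum_le_tsum s fun i _ => b_nonneg i)

end FinsuppProd

lemma summable_norm_div_one_sub {ι 𝕜 : Type*} [NormedDivisionRing 𝕜] {x : ι → 𝕜}
    (hx : Summable fun i => ‖x i‖) : Summable fun i => ‖x i / (1 - x i)‖ := by
  refine (hx.mul_left 2).of_norm_bounded_eventually ?_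
  filter_upwards [hx.tendsto_cofinite_zero.eventually_le_const one_half_pos] with i norm_le_half
  have half_le_norm : 1 / 2 ≤ ‖1 - x i‖ := by
    linarith [norm_sub_norm_le 1 (x i), norm_one (α := 𝕜)]
  calc ‖‖x i / (1 - x i)‖‖
      = ‖x i‖ / ‖1 - x i‖ := by rw [norm_norm, norm_div]
    _ ≤ ‖x i‖ / (1 / 2) := by gcongr
    _ = 2 * ‖x i‖ := by ring

lemma sum_norm_pow_le {R : Type*} [SeminormedRing R] [NormOneClass R] {x : R} (hx : ‖x‖ < 1)
    (t : Finset ℕ) : ∑ n ∈ t, ‖x ^ n‖ ≤ 1 + ‖x‖ / (1 - ‖x‖) :=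
  calc ∑ n ∈ t, ‖x ^ n‖
      ≤ ∑ n ∈ t, ‖x‖ ^ n := Finset.sum_le_sum fun n _ => norm_pow_le x n
    _ ≤ (1 - ‖x‖)⁻¹ :=
        sum_le_hasSum t (fun n _ => pow_nonneg (norm_nonneg x) n)
          (hasSum_geometric_of_lt_one (norm_nonneg x) hx)
    _ = 1 + ‖x‖ / (1 - ‖x‖) := by
        field_simp [(sub_pos.mpr hx).ne']
        ring

lemma summable_norm_finsupp_prod_pow {ι R : Type*} [NormedCommRing R] [NormOneClass R]
    {x : ι → R} (hx_lt_one : ∀ i, ‖x i‖ < 1) (hx : Summable fun i => ‖x i‖) :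
    Summable fun γ : ι →₀ ℕ => ‖γ.prod fun i n => x i ^ n‖ :=
  summable_norm_finsupp_prod (fun i => pow_zero (x i)) (fun i => sum_norm_pow_le (hx_lt_one i))
    (summable_norm_div_one_sub hx.norm).of_norm

lemma summable_const_mul_pnat_rpow {a c : ℝ} (ha : 0 ≤ a) (hc : c < -1) :
    Summable fun j : ℕ+ => (a * (j : ℝ)) ^ c := by
  have summable_nat : Summable fun n : ℕ => (a * (n : ℝ)) ^ c := by
    simpa only [Real.mul_rpow ha (Nat.cast_nonneg _)]
      using (Real.summable_nat_rpow.mpr hc).mul_left (a ^ c)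
  exact summable_nat.comp_injective PNat.coe_injective

lemma twoNpow_eq_prod_pow (c : ℝ) (γ : MultiIndex) :
    twoNpow c γ = γ.prod fun j n => ((2 * (j : ℝ)) ^ c) ^ n :=
  Finset.prod_congr rfl fun j _ => Real.rpow_mul_natCast (by positivity) c (γ j)

/-- Zhang's lemma: for every `k > 1` the family `γ ↦ (2ℕ)^{-kγ}` is summable over
the set of all multi-indices. -/
theorem zhang_lemma (k : ℝ) (hk : 1 < k) :
    Summable fun γ : MultiIndex => twoNpow (-k) γ := by
  have norm_lt_one (j : ℕ+) : ‖(2 * (j : ℝ)) ^ (-k)‖ < 1 := by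
    have one_le_j : (1 : ℝ) ≤ j := by exact_mod_cast (one_le : 1 ≤ j)
    rw [Real.norm_of_nonneg (by positivity)]
    exact Real.rpow_lt_one_of_one_lt_of_neg (by linarith) (by linarith)
  have summable_norm : Summable fun j : ℕ+ => ‖(2 * (j : ℝ)) ^ (-k)‖ :=
    (summable_const_mul_pnat_rpow zero_le_two (neg_lt_neg hk)).norm
  simp only [twoNpow_eq_prod_pow]
  exact (summable_norm_finsupp_prod_pow norm_lt_one summable_norm).of_norm
end

section
/- Let d ≥ 1 and let T be a continuous linear functional on the Schwartz space S(ℝ^d) (i.e. a tempered distribution). Set b_β := T(η_β) for each β ∈ ℕ₊^d. Then there exists a d-tuple θ = (θ₁,…,θ_d) of non-negative integers such that ∑_{β∈ℕ₊^d} b_β² · β₁^{−θ₁}⋯β_d^{−θ_d} < ∞. -/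
open scoped BigOperators

/-- The `n`-th Hermite function `ζ_n` (indexed by `n ∈ ℕ₊`):
`ζ_n(x) = π^{-1/4} ((n-1)!)^{-1/2} e^{-x²/2} h_{n-1}(√2 x)`,
where `h_k` is the `k`-th (probabilists') Hermite polynomial. -/
noncomputable def hermiteFun (n : ℕ+) (x : ℝ) : ℝ :=
  Real.pi ^ (-(1 / 4 : ℝ)) * ((Nat.factorial ((n : ℕ) - 1) : ℝ)) ^ (-(1 / 2 : ℝ)) *
    Real.exp (-x ^ 2 / 2) *
      Polynomial.aeval (Real.sqrt 2 * x) (Polynomial.hermite ((n : ℕ) - 1))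

/-- The tensor-product Hermite function `η_β` on `ℝ^d`, for `β ∈ ℕ₊^d`. -/
noncomputable def hermiteTensor {d : ℕ} (β : Fin d → ℕ+)
    (x : EuclideanSpace ℝ (Fin d)) : ℝ :=
  ∏ i, hermiteFun (β i) (x i)

/-!
A continuous functional is bounded by finitely many Schwartz seminorms, so it suffices to bound
each seminorm of `η_β` by a power of `∏ i, β_i`; the series is then dominated by a product of
convergent series `∑ n⁻²`. By the Leibniz rule the seminorms of a tensor product are controlled by
the one-dimensional quantities `(1 + |x|)^k |ζ_n^{(m)}(x)|`. The ladder relations write `x ζ_n` and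
the derivative of `ζ_n` as combinations of `ζ_{n-1}` and `ζ_{n+1}` with coefficients `O(√n)`, which
reduces these to `sup |ζ_n|`. Finally `e^{-y²/2} h_n(y)` is, up to sign, the `n`-th derivative of
the entire function `e^{-z²/2}`, and Cauchy's estimate on a circle of radius `√(n+1)` about `y`,
combined with Stirling's formula, gives `ζ_{n+1}² ≤ e √(n+1)`.
-/

section PolynomialGrowth

open Asymptotics Filter

/-- `f` grows at most polynomially in the weight `w`: it is bounded by a constant times a power
of `w`, uniformly on the whole of `X`. -/
def HasPolynomialGrowth {X E : Type*} [Norm E] (w : X → ℝ) (f : X → E) : Prop :=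
  ∃ p : ℕ, f =O[⊤] fun x => w x ^ p

namespace HasPolynomialGrowth

variable {X E : Type*} [SeminormedAddCommGroup E] {w : X → ℝ}

theorem of_norm_le {f : X → E} {C : ℝ} {p : ℕ} (h : ∀ x, ‖f x‖ ≤ C * w x ^ p) :
    HasPolynomialGrowth w f :=
  ⟨p, (IsBigO.of_norm_le h).trans (isBigO_const_mul_self C _ ⊤)⟩

theorem exists_norm_le {f : X → E} (hf : HasPolynomialGrowth w f) (hw : ∀ x, 0 ≤ w x) :
    ∃ C ≥ 0, ∃ p : ℕ, ∀ x, ‖f x‖ ≤ C * w x ^ p := by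
  obtain ⟨p, hp⟩ := hf
  obtain ⟨C, hC, hfC⟩ := hp.exists_nonneg
  refine ⟨C, hC, p, fun x => ?_⟩
  simpa only [norm_pow, Real.norm_of_nonneg (hw x)] using isBigOWith_top.1 hfC x

theorem exists_forall_norm_le {ι : Type*} {s : Finset ι} {f : ι → X → E} (hw : ∀ x, 1 ≤ w x)
    (hf : ∀ i ∈ s, HasPolynomialGrowth w (f i)) :
    ∃ C ≥ 0, ∃ p : ℕ, ∀ i ∈ s, ∀ x, ‖f i x‖ ≤ C * w x ^ p := by
  choose! C hC p hfC using fun i hi =>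
    (hf i hi).exists_norm_le fun x => zero_le_one.trans (hw x)
  refine ⟨∑ i ∈ s, C i, Finset.sum_nonneg hC, s.sup p, fun i hi x => (hfC i hi x).trans ?_⟩
  have hwx : 0 ≤ w x := zero_le_one.trans (hw x)
  gcongr
  · exact Finset.sum_nonneg hC
  · exact Finset.single_le_sum hC hi
  · exact hw x
  · exact Finset.le_sup hi

theorem clm_apply {𝕜 V κ F : Type*} [NontriviallyNormedField 𝕜] [AddCommGroup V]
    [Module 𝕜 V] [TopologicalSpace V] [SeminormedAddCommGroup F] [NormedSpace 𝕜 F]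
    {q : SeminormFamily 𝕜 V κ} (hq : WithSeminorms q) (hw : ∀ x, 1 ≤ w x) {u : X → V}
    (hu : ∀ j, HasPolynomialGrowth w fun x => q j (u x)) (T : V →L[𝕜] F) :
    HasPolynomialGrowth w fun x => T (u x) := by
  obtain ⟨s, A, -, hT⟩ := Seminorm.bound_of_continuous hq
    ((normSeminorm 𝕜 F).comp T.toLinearMap) (continuous_norm.comp T.continuous)
  obtain ⟨C, hC, p, hqC⟩ := exists_forall_norm_le hw fun j (_ : j ∈ s) => hu j
  refine of_norm_le (C := A * C) (p := p) fun x => ?_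
  have hwx : 0 ≤ w x := zero_le_one.trans (hw x)
  calc ‖T (u x)‖ ≤ A * s.sup q (u x) := hT (u x)
    _ ≤ A * (C * w x ^ p) := by
      gcongr
      exact Seminorm.finset_sup_apply_le (by positivity) fun j hj =>
        (le_abs_self _).trans (hqC j hj x)
    _ = A * C * w x ^ p := (mul_assoc ..).symm

theorem of_le_neighbours {α : Type*} {f g : ℕ × α → ℝ}
    (hf : HasPolynomialGrowth (fun q : ℕ × α => (q.1 : ℝ) + 1) f)
    (hg : ∀ n a, |g (n, a)| ≤ (n + 1) * (|f (n - 1, a)| + |f (n, a)| + |f (n + 1, a)|)) :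
    HasPolynomialGrowth (fun q : ℕ × α => (q.1 : ℝ) + 1) g := by
  obtain ⟨C, hC, p, hfC⟩ := hf.exists_norm_le fun q => by positivity
  have hf' (n m : ℕ) (a : α) (hm : m ≤ n + 1) : |f (m, a)| ≤ C * (2 * (n + 1)) ^ p := by
    have : (m : ℝ) ≤ n + 1 := mod_cast hm
    exact (hfC (m, a)).trans (by gcongr; dsimp only; linarith [n.cast_nonneg (α := ℝ)])
  refine of_norm_le (C := 3 * C * 2 ^ p) (p := p + 1) fun (n, a) => (hg n a).trans ?_
  calc (n + 1 : ℝ) * (|f (n - 1, a)| + |f (n, a)| + |f (n + 1, a)|)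
      ≤ (n + 1) * (C * (2 * (n + 1)) ^ p + C * (2 * (n + 1)) ^ p + C * (2 * (n + 1)) ^ p) := by
        gcongr <;> exact hf' n _ a (by lia)
    _ = 3 * C * 2 ^ p * (n + 1 : ℝ) ^ (p + 1) := by rw [mul_pow]; ring

end HasPolynomialGrowth

theorem summable_pi_prod_of_nonneg {ι : Type*} [Fintype ι] {κ : ι → Type*} {g : ∀ i, κ i → ℝ}
    (hg₀ : ∀ i j, 0 ≤ g i j) (hg : ∀ i, Summable (g i)) :
    Summable fun β : ∀ i, κ i => ∏ i, g i (β i) := by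
  classical
  refine summable_of_sum_le (c := ∏ i, ∑' j, g i j)
    (fun β => Finset.prod_nonneg fun i _ => hg₀ i _) fun s => ?_
  calc ∑ β ∈ s, ∏ i, g i (β i)
      ≤ ∑ β ∈ Fintype.piFinset fun i => s.image (· i), ∏ i, g i (β i) :=
        Finset.sum_le_sum_of_subset_of_nonneg
          (fun β hβ => Fintype.mem_piFinset.2 fun i => Finset.mem_image_of_mem (· i) hβ)
          fun β _ _ => Finset.prod_nonneg fun i _ => hg₀ i _
    _ = ∏ i, ∑ j ∈ s.image (· i), g i j := (Finset.prod_univ_sum _ _).symm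
    _ ≤ ∏ i, ∑' j, g i j := by
        gcongr with i
        · exact fun i _ => Finset.sum_nonneg fun j _ => hg₀ i j
        · exact (hg i).sum_le_tsum _ fun j _ => hg₀ i j

theorem HasPolynomialGrowth.exists_summable_sq_mul_prod_inv_pow {ι : Type*} [Fintype ι]
    {b : (ι → ℕ+) → ℝ} (hb : HasPolynomialGrowth (fun β : ι → ℕ+ => ∏ i, ((β i : ℕ) : ℝ)) b) :
    ∃ θ : ι → ℕ, Summable fun β : ι → ℕ+ => b β ^ 2 * ∏ i, (((β i : ℕ) : ℝ) ^ θ i)⁻¹ := by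
  obtain ⟨C, -, p, hbC⟩ := hb.exists_norm_le fun β => by positivity
  have hsq : Summable fun n : ℕ+ => (((n : ℕ) : ℝ) ^ 2)⁻¹ :=
    (Real.summable_nat_pow_inv.2 one_lt_two).comp_injective PNat.coe_injective
  have hprod : Summable fun β : ι → ℕ+ => ∏ i, (((β i : ℕ) : ℝ) ^ 2)⁻¹ :=
    summable_pi_prod_of_nonneg (g := fun _ (n : ℕ+) => (((n : ℕ) : ℝ) ^ 2)⁻¹)
      (fun _ _ => by positivity) fun _ => hsq
  refine ⟨fun _ => 2 * p + 2, (hprod.mul_left (C ^ 2)).of_nonneg_of_le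
    (fun β => by positivity) fun β => ?_⟩
  have hbβ : |b β| ≤ C * (∏ i, ((β i : ℕ) : ℝ)) ^ p := hbC β
  have hpos : 0 < ∏ i, ((β i : ℕ) : ℝ) := by positivity
  simp only [Finset.prod_inv_distrib, Finset.prod_pow]
  generalize ∏ i, ((β i : ℕ) : ℝ) = W at hbβ hpos ⊢
  calc b β ^ 2 * (W ^ (2 * p + 2))⁻¹ ≤ (C * W ^ p) ^ 2 * (W ^ (2 * p + 2))⁻¹ := by
        rw [← sq_abs]
        gcongr
    _ = C ^ 2 * (W ^ 2)⁻¹ := by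
        field_simp
        ring

end PolynomialGrowth

section TensorProduct

theorem one_add_sum_le_prod_one_add {ι R : Type*} [CommSemiring R] [PartialOrder R]
    [IsOrderedRing R] {s : Finset ι} {f : ι → R} (hf : ∀ i ∈ s, 0 ≤ f i) :
    1 + ∑ i ∈ s, f i ≤ ∏ i ∈ s, (1 + f i) := by
  classical
  induction s using Finset.induction_on with
  | empty => simp
  | insert i s hi ih =>
    rw [Finset.forall_mem_insert] at hf
    rw [Finset.sum_insert hi, Finset.prod_insert hi]
    calc 1 + (f i + ∑ j ∈ s, f j) ≤ 1 + (f i + ∑ j ∈ s, f j) + f i * ∑ j ∈ s, f j :=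
          le_add_of_nonneg_right (mul_nonneg hf.1 (Finset.sum_nonneg hf.2))
      _ = (1 + f i) * (1 + ∑ j ∈ s, f j) := by ring
      _ ≤ (1 + f i) * ∏ j ∈ s, (1 + f j) :=
          mul_le_mul_of_nonneg_left (ih hf.2) (add_nonneg zero_le_one hf.1)

variable {ι : Type*} [Fintype ι]

theorem norm_le_prod_one_add_abs (x : EuclideanSpace ℝ ι) : ‖x‖ ≤ ∏ i, (1 + |x i|) := by
  have hsum : ‖x‖ ≤ ∑ i, |x i| := by
    rw [EuclideanSpace.norm_eq]
    exact Real.sqrt_le_iff.2 ⟨by positivity,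
      Finset.sum_sq_le_sq_sum_of_nonneg fun i _ => norm_nonneg (x i)⟩
  linarith [one_add_sum_le_prod_one_add (s := Finset.univ) fun i _ => abs_nonneg (x i)]

theorem norm_iteratedFDeriv_comp_coord_le {A : Type*} [NormedAddCommGroup A]
    [NormedSpace ℝ A] {f : ℝ → A} {n : ℕ} (hf : ContDiff ℝ n f) (i : ι) (x : EuclideanSpace ℝ ι) :
    ‖iteratedFDeriv ℝ n (fun y : EuclideanSpace ℝ ι => f (y i)) x‖ ≤
      ‖iteratedDeriv n f (x i)‖ := by
  have hproj : ‖(EuclideanSpace.proj i : EuclideanSpace ℝ ι →L[ℝ] ℝ)‖ ≤ 1 :=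
    ContinuousLinearMap.opNorm_le_bound _ zero_le_one fun y => by
      simpa using PiLp.norm_apply_le y i
  calc ‖iteratedFDeriv ℝ n (f ∘ EuclideanSpace.proj i) x‖
      = ‖(iteratedFDeriv ℝ n f (x i)).compContinuousLinearMap
          fun _ => (EuclideanSpace.proj i : EuclideanSpace ℝ ι →L[ℝ] ℝ)‖ := by
        rw [ContinuousLinearMap.iteratedFDeriv_comp_right _ hf x le_rfl]; rfl
    _ ≤ ‖iteratedFDeriv ℝ n f (x i)‖ *
          ∏ _ : Fin n, ‖(EuclideanSpace.proj i : EuclideanSpace ℝ ι →L[ℝ] ℝ)‖ :=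
        ContinuousMultilinearMap.norm_compContinuousLinearMap_le _ _
    _ ≤ ‖iteratedDeriv n f (x i)‖ := by
        rw [norm_iteratedFDeriv_eq_norm_iteratedDeriv]
        exact mul_le_of_le_one_right (norm_nonneg _)
          (Finset.prod_le_one (fun _ _ => norm_nonneg _) fun _ _ => hproj)

theorem mul_norm_iteratedFDeriv_prod_le [DecidableEq ι] {𝕜 E A : Type*}
    [NontriviallyNormedField 𝕜] [NormedAddCommGroup E] [NormedSpace 𝕜 E] [NormedCommRing A]
    [NormedAlgebra 𝕜 A] [NormOneClass A] {f : ι → E → A} {n : ℕ} {x : E} {c B : ℝ} (hc : 0 ≤ c)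
    (hf : ∀ i, ContDiff 𝕜 n (f i))
    (hB : ∀ p : Sym ι n,
      c * ∏ i, ‖iteratedFDeriv 𝕜 ((p : Multiset ι).count i) (f i) x‖ ≤ B) :
    c * ‖iteratedFDeriv 𝕜 n (fun y => ∏ i, f i y) x‖ ≤ Fintype.card ι ^ n * B := by
  have hcard : ∑ p ∈ (Finset.univ : Finset ι).sym n, ((p : Multiset ι).countPerms : ℝ) =
      Fintype.card ι ^ n := by
    simpa using (Finset.sum_pow (R := ℝ) (s := (Finset.univ : Finset ι)) (fun _ => 1) n).symm
  calc c * ‖iteratedFDeriv 𝕜 n (fun y => ∏ i, f i y) x‖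
      ≤ c * ∑ p ∈ (Finset.univ : Finset ι).sym n, (p : Multiset ι).countPerms *
          ∏ i, ‖iteratedFDeriv 𝕜 ((p : Multiset ι).count i) (f i) x‖ := by
        gcongr
        exact norm_iteratedFDeriv_prod_le (fun i _ => hf i) le_rfl
    _ = ∑ p ∈ (Finset.univ : Finset ι).sym n, (p : Multiset ι).countPerms *
          (c * ∏ i, ‖iteratedFDeriv 𝕜 ((p : Multiset ι).count i) (f i) x‖) := by
        rw [Finset.mul_sum]
        exact Finset.sum_congr rfl fun p _ => mul_left_comm ..
    _ ≤ ∑ p ∈ (Finset.univ : Finset ι).sym n, (p : Multiset ι).countPerms * B := by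
        gcongr with p
        exact hB p
    _ = Fintype.card ι ^ n * B := by rw [← Finset.sum_mul, hcard]

theorem pow_norm_mul_norm_iteratedFDeriv_prod_coord_le {A : Type*} [NormedCommRing A]
    [NormedAlgebra ℝ A] [NormOneClass A] {f : ι → ℝ → A} {k n : ℕ} {M : ι → ℝ}
    (hf : ∀ i, ContDiff ℝ n (f i))
    (hM : ∀ i, ∀ m ≤ n, ∀ t, (1 + |t|) ^ k * ‖iteratedDeriv m (f i) t‖ ≤ M i)
    (x : EuclideanSpace ℝ ι) :
    ‖x‖ ^ k * ‖iteratedFDeriv ℝ n (fun y : EuclideanSpace ℝ ι => ∏ i, f i (y i)) x‖ ≤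
      Fintype.card ι ^ n * ∏ i, M i := by
  classical
  refine mul_norm_iteratedFDeriv_prod_le (by positivity)
    (fun i => (hf i).comp (EuclideanSpace.proj (𝕜 := ℝ) i).contDiff) fun p => ?_
  have hcount (i : ι) : (p : Multiset ι).count i ≤ n :=
    (Multiset.count_le_card i _).trans_eq p.card_coe
  calc ‖x‖ ^ k * ∏ i, ‖iteratedFDeriv ℝ ((p : Multiset ι).count i)
        (fun y : EuclideanSpace ℝ ι => f i (y i)) x‖
      ≤ (∏ i, (1 + |x i|)) ^ k *
          ∏ i, ‖iteratedDeriv ((p : Multiset ι).count i) (f i) (x i)‖ := by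
        gcongr with i
        · exact norm_le_prod_one_add_abs x
        · exact norm_iteratedFDeriv_comp_coord_le ((hf i).of_le (mod_cast hcount i)) i x
    _ = ∏ i, (1 + |x i|) ^ k * ‖iteratedDeriv ((p : Multiset ι).count i) (f i) (x i)‖ := by
        rw [← Finset.prod_pow, Finset.prod_mul_distrib]
    _ ≤ ∏ i, M i := by
        gcongr with i
        exact hM i _ (hcount i) (x i)

end TensorProduct

section Hermite

open Polynomial Real
open scoped Nat

theorem derivative_hermite (n : ℕ) :
    derivative (hermite n) = (n : ℤ[X]) * hermite (n - 1) := by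
  induction n with
  | zero => simp
  | succ n ih =>
    rw [hermite_succ, derivative_sub, derivative_mul, derivative_X, ih]
    cases n with
    | zero => simp
    | succ m =>
      simp only [derivative_mul, derivative_natCast, Nat.add_sub_cancel, hermite_succ m]
      push_cast
      ring

theorem iteratedDeriv_cexp_neg_sq_div_two (n : ℕ) :
    iteratedDeriv n (fun z : ℂ => Complex.exp (-(z ^ 2 / 2))) = fun z =>
      (-1) ^ n * (aeval z (hermite n) * Complex.exp (-(z ^ 2 / 2))) := by
  induction n with
  | zero => simp
  | succ n ih =>
    ext z
    have hexp : HasDerivAt (fun w : ℂ => Complex.exp (-(w ^ 2 / 2)))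
        (-z * Complex.exp (-(z ^ 2 / 2))) z :=
      (((hasDerivAt_pow 2 z).div_const 2).fun_neg.cexp).congr_deriv (by push_cast; ring)
    have hpoly := (hermite n).hasDerivAt_aeval z
    rw [iteratedDeriv_succ, ih, ((hpoly.fun_mul hexp).const_mul ((-1) ^ n)).deriv, hermite_succ,
      map_sub, map_mul, aeval_X]
    ring

theorem norm_cexp_neg_sq_div_two_le (y : ℝ) (z : ℂ) :
    ‖Complex.exp (-(z ^ 2 / 2))‖ ≤ exp (‖z - y‖ ^ 2 / 2 - y ^ 2 / 4) := by
  rw [Complex.norm_exp, exp_le_exp, ← Complex.normSq_eq_norm_sq, Complex.normSq_apply]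
  have hre : (-(z ^ 2 / 2)).re = (z.im ^ 2 - z.re ^ 2) / 2 := by
    simp only [pow_two, Complex.neg_re, Complex.div_ofNat_re, Complex.mul_re]
    ring
  simp only [hre, Complex.sub_re, Complex.sub_im, Complex.ofReal_re, Complex.ofReal_im]
  nlinarith [sq_nonneg (2 * z.re - y)]

/-- The rate `y ^ 2 / 4` is the growth that the factor `exp (-x ^ 2 / 2)` of a Hermite function
absorbs at `y = √2 * x`. -/
theorem abs_aeval_hermite_le (n : ℕ) (y : ℝ) {r : ℝ} (hr : 0 < r) :
    |aeval y (hermite n)| ≤ n ! * exp (r ^ 2 / 2) / r ^ n * exp (y ^ 2 / 4) := by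
  have hcauchy := Complex.norm_iteratedDeriv_le_of_forall_mem_sphere_norm_le
    (f := fun z : ℂ => Complex.exp (-(z ^ 2 / 2))) (c := y) n hr
    (Differentiable.diffContOnCl (by fun_prop)) fun z hz =>
      (norm_cexp_neg_sq_div_two_le y z).trans_eq (by rw [mem_sphere_iff_norm.1 hz])
  have hnorm : ‖iteratedDeriv n (fun z : ℂ => Complex.exp (-(z ^ 2 / 2))) y‖ =
      |aeval y (hermite n)| * exp (-(y ^ 2 / 2)) := by
    have haeval : aeval (y : ℂ) (hermite n) = (aeval y (hermite n) : ℝ) :=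
      aeval_algebraMap_apply ℂ y _
    have hgauss : Complex.exp (-((y : ℂ) ^ 2 / 2)) = (exp (-(y ^ 2 / 2)) : ℝ) := by
      push_cast
      rfl
    simp only [iteratedDeriv_cexp_neg_sq_div_two, haeval, hgauss, norm_mul, norm_pow,
      norm_neg, norm_one, one_pow, one_mul, Complex.norm_real, norm_eq_abs, abs_exp]
  rw [hnorm, exp_sub] at hcauchy
  have hexp : exp (y ^ 2 / 2) = exp (y ^ 2 / 4) ^ 2 := by
    rw [← exp_nat_mul]; ring_nf
  rw [exp_neg, hexp] at hcauchy
  field_simp at hcauchy ⊢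
  exact hcauchy

theorem factorial_mul_exp_div_pow_le (n : ℕ) :
    n ! * exp (n + 1) / (n + 1) ^ n ≤ exp 1 * √(n + 1) := by
  have h : Stirling.stirlingSeq (n + 1) ≤ Stirling.stirlingSeq 1 :=
    Stirling.stirlingSeq'_antitone (Nat.zero_le n)
  rw [Stirling.stirlingSeq_one, Stirling.stirlingSeq, div_pow, ← exp_nat_mul,
    Nat.factorial_succ, sqrt_mul (by norm_num)] at h
  push_cast at h
  rw [mul_one, pow_succ] at h
  field_simp at h ⊢
  exact h

/-- The `L²`-normalised Hermite function of degree `n`, that is `ζ_{n+1}`. Indexing by the degree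
makes the ladder relations uniform: at `n = 0` the truncated index `n - 1` only occurs with a
vanishing coefficient. -/
noncomputable def hermiteFunction (n : ℕ) (x : ℝ) : ℝ :=
  π ^ (-(1 / 4 : ℝ)) * (n ! : ℝ) ^ (-(1 / 2 : ℝ)) * exp (-x ^ 2 / 2) *
    aeval (√2 * x) (hermite n)

theorem contDiff_hermiteFunction (n : ℕ) {r : WithTop ℕ∞} : ContDiff ℝ r (hermiteFunction n) := by
  have hpoly : ContDiff ℝ r fun x : ℝ => aeval (√2 * x) (hermite n) :=
    (contDiff_aeval _ _).comp (contDiff_const.mul contDiff_id)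
  unfold hermiteFunction
  fun_prop

theorem sq_hermiteFunction_le (n : ℕ) (x : ℝ) :
    hermiteFunction n x ^ 2 ≤ exp 1 * √(n + 1) := by
  -- Unlike the optimal radius `√n`, this one is also positive for `n = 0`.
  have hr : (0 : ℝ) < √(n + 1) := by positivity
  have hhermite : aeval (√2 * x) (hermite n) ^ 2 ≤
      (n ! * exp ((n + 1) / 2) / √(n + 1) ^ n * exp (x ^ 2 / 2)) ^ 2 := by
    have h := abs_aeval_hermite_le n (√2 * x) hr
    have hx : (√2 * x) ^ 2 / 4 = x ^ 2 / 2 := by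
      rw [mul_pow, sq_sqrt zero_le_two]; ring
    rw [sq_sqrt (by positivity), hx] at h
    exact sq_le_sq.2 (h.trans (le_abs_self _))
  have hnorm : (π ^ (-(1 / 4 : ℝ)) * (n ! : ℝ) ^ (-(1 / 2 : ℝ))) ^ 2 ≤
      (n ! : ℝ)⁻¹ := by
    have hπ : π ^ (-(1 / 4 : ℝ)) ≤ 1 :=
      rpow_le_one_of_one_le_of_nonpos (by linarith [pi_gt_three]) (by norm_num)
    have hfact : ((n ! : ℝ) ^ (-(1 / 2 : ℝ))) ^ 2 = (n ! : ℝ)⁻¹ := by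
      rw [← rpow_mul_natCast (by positivity), ← rpow_neg_one]
      norm_num
    rw [mul_pow, hfact]
    exact mul_le_of_le_one_left (by positivity) (pow_le_one₀ (by positivity) hπ)
  calc hermiteFunction n x ^ 2
      = (π ^ (-(1 / 4 : ℝ)) * (n ! : ℝ) ^ (-(1 / 2 : ℝ))) ^ 2 *
          (exp (-x ^ 2 / 2) ^ 2 * aeval (√2 * x) (hermite n) ^ 2) := by
        rw [hermiteFunction]; ring
    _ ≤ (n ! : ℝ)⁻¹ * (exp (-x ^ 2 / 2) ^ 2 *
          (n ! * exp ((n + 1) / 2) / √(n + 1) ^ n * exp (x ^ 2 / 2)) ^ 2) := by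
        gcongr
    _ = n ! * exp ((n + 1) / 2) ^ 2 / (√(n + 1) ^ 2) ^ n *
          (exp (-x ^ 2 / 2) * exp (x ^ 2 / 2)) ^ 2 := by
        rw [← pow_mul, mul_comm 2 n, pow_mul]
        field_simp
    _ = n ! * exp (n + 1) / (n + 1) ^ n := by
        have hcancel : -x ^ 2 / 2 + x ^ 2 / 2 = 0 := by ring
        rw [sq_sqrt (by positivity), ← exp_nat_mul, ← exp_add, hcancel, exp_zero, one_pow, mul_one,
          Nat.cast_two, mul_div_cancel₀ _ two_ne_zero]
    _ ≤ exp 1 * √(n + 1) := factorial_mul_exp_div_pow_le n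

theorem abs_hermiteFunction_le (n : ℕ) (x : ℝ) : |hermiteFunction n x| ≤ 2 * (n + 1) := by
  have hsqrt : √((n : ℝ) + 1) ≤ n + 1 :=
    sqrt_le_iff.2 ⟨by positivity, by nlinarith [n.cast_nonneg (α := ℝ)]⟩
  refine abs_le_of_sq_le_sq ?_ (by positivity)
  calc hermiteFunction n x ^ 2 ≤ exp 1 * √(n + 1) := sq_hermiteFunction_le n x
    _ ≤ 4 * ((n : ℝ) + 1) ^ 2 := by
      nlinarith [exp_one_lt_three, exp_pos 1, n.cast_nonneg (α := ℝ)]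
    _ = (2 * ((n : ℝ) + 1)) ^ 2 := by ring

theorem sqrt_succ_mul_factorial_succ_rpow (n : ℕ) :
    √(n + 1) * ((n + 1)! : ℝ) ^ (-(1 / 2 : ℝ)) = (n ! : ℝ) ^ (-(1 / 2 : ℝ)) := by
  have hn : (0 : ℝ) < n + 1 := by positivity
  rw [Nat.factorial_succ, Nat.cast_mul, mul_rpow (by positivity) (by positivity),
    sqrt_eq_rpow, ← mul_assoc, Nat.cast_succ, ← rpow_add hn]
  norm_num

theorem sqrt_mul_hermiteFunction_pred (n : ℕ) (x : ℝ) :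
    √n * hermiteFunction (n - 1) x =
      π ^ (-(1 / 4 : ℝ)) * (n ! : ℝ) ^ (-(1 / 2 : ℝ)) * exp (-x ^ 2 / 2) *
        aeval (√2 * x) (derivative (hermite n)) := by
  cases n with
  | zero => simp
  | succ n =>
    have hsq : √((n : ℝ) + 1) ^ 2 = n + 1 := sq_sqrt (by positivity)
    have haeval : aeval (√2 * x) (derivative (hermite (n + 1))) =
        (n + 1) * aeval (√2 * x) (hermite n) := by
      rw [derivative_hermite, Nat.add_sub_cancel, map_mul, map_natCast, Nat.cast_succ]
    rw [haeval, ← hsq, hermiteFunction, Nat.add_sub_cancel, ← sqrt_succ_mul_factorial_succ_rpow n,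
      Nat.cast_succ]
    ring

theorem sqrt_succ_mul_hermiteFunction_succ (n : ℕ) (x : ℝ) :
    √(n + 1) * hermiteFunction (n + 1) x =
      √2 * x * hermiteFunction n x - √n * hermiteFunction (n - 1) x := by
  rw [sqrt_mul_hermiteFunction_pred, hermiteFunction, hermiteFunction, hermite_succ, map_sub,
    map_mul, aeval_X, ← sqrt_succ_mul_factorial_succ_rpow n]
  ring

theorem mul_hermiteFunction (n : ℕ) (x : ℝ) :
    x * hermiteFunction n x =
      √(n / 2) * hermiteFunction (n - 1) x + √((n + 1) / 2) * hermiteFunction (n + 1) x := by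
  have hrec := sqrt_succ_mul_hermiteFunction_succ n x
  rw [sqrt_div (by positivity), sqrt_div (by positivity)]
  field_simp
  linear_combination -hrec

theorem deriv_hermiteFunction (n : ℕ) :
    deriv (hermiteFunction n) = fun x =>
      √(n / 2) * hermiteFunction (n - 1) x - √((n + 1) / 2) * hermiteFunction (n + 1) x := by
  ext x
  have hexp : HasDerivAt (fun t : ℝ => exp (-t ^ 2 / 2)) (exp (-x ^ 2 / 2) * -x) x :=
    ((hasDerivAt_pow 2 x).fun_neg.div_const 2).exp.congr_deriv (by push_cast; ring)
  have hpoly : HasDerivAt (fun t : ℝ => aeval (√2 * t) (hermite n))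
      (aeval (√2 * x) (derivative (hermite n)) * (√2 * 1)) x :=
    ((hermite n).hasDerivAt_aeval (√2 * x)).comp x ((hasDerivAt_id x).const_mul √2)
  have hprod : HasDerivAt (hermiteFunction n)
      (√2 * (√n * hermiteFunction (n - 1) x) - x * hermiteFunction n x) x := by
    refine ((hexp.const_mul _).fun_mul hpoly).congr_deriv ?_
    rw [sqrt_mul_hermiteFunction_pred, hermiteFunction]
    ring
  have hsqrt : √2 * √n = 2 * √(n / 2 : ℝ) := by
    rw [sqrt_div (by positivity)]
    field_simp
    rw [sq_sqrt zero_le_two, mul_comm]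
  rw [hprod.deriv]
  linear_combination hermiteFunction (n - 1) x * hsqrt - mul_hermiteFunction n x

theorem abs_sqrt_mul_add_abs_sqrt_mul_le (n : ℕ) (u v : ℝ) :
    |√(n / 2) * u| + |√((n + 1) / 2) * v| ≤ (n + 1) * (|u| + |v|) := by
  have hpred : √(n / 2 : ℝ) ≤ n + 1 :=
    sqrt_le_iff.2 ⟨by positivity, by nlinarith [n.cast_nonneg (α := ℝ)]⟩
  have hsucc : √((n + 1) / 2 : ℝ) ≤ n + 1 :=
    sqrt_le_iff.2 ⟨by positivity, by nlinarith [n.cast_nonneg (α := ℝ)]⟩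
  rw [abs_mul, abs_mul, abs_of_nonneg (sqrt_nonneg _), abs_of_nonneg (sqrt_nonneg _), mul_add]
  gcongr

theorem abs_mul_hermiteFunction_le (n : ℕ) (x : ℝ) :
    |x * hermiteFunction n x| ≤
      (n + 1) * (|hermiteFunction (n - 1) x| + |hermiteFunction (n + 1) x|) := by
  rw [mul_hermiteFunction]
  exact (abs_add_le _ _).trans (abs_sqrt_mul_add_abs_sqrt_mul_le n _ _)

theorem abs_iteratedDeriv_succ_hermiteFunction_le (m n : ℕ) (x : ℝ) :
    |iteratedDeriv (m + 1) (hermiteFunction n) x| ≤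
      (n + 1) * (|iteratedDeriv m (hermiteFunction (n - 1)) x| +
        |iteratedDeriv m (hermiteFunction (n + 1)) x|) := by
  have hsmooth (c : ℝ) (j : ℕ) : ContDiffAt ℝ m (fun t => c * hermiteFunction j t) x :=
    (contDiff_const.mul (contDiff_hermiteFunction j)).contDiffAt
  rw [iteratedDeriv_succ', deriv_hermiteFunction, iteratedDeriv_fun_sub (hsmooth _ _) (hsmooth _ _),
    iteratedDeriv_const_mul_field, iteratedDeriv_const_mul_field]
  exact (abs_sub _ _).trans (abs_sqrt_mul_add_abs_sqrt_mul_le n _ _)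

theorem hasPolynomialGrowth_pow_mul_hermiteFunction (k : ℕ) :
    HasPolynomialGrowth (fun q : ℕ × ℝ => (q.1 : ℝ) + 1) fun q =>
      (1 + |q.2|) ^ k * hermiteFunction q.1 q.2 := by
  induction k with
  | zero =>
    refine .of_norm_le (C := 2) (p := 1) fun q => ?_
    simpa only [pow_zero, one_mul, pow_one, norm_eq_abs] using abs_hermiteFunction_le q.1 q.2
  | succ k ih =>
    refine ih.of_le_neighbours fun n x => ?_
    have hx₁ : 0 ≤ 1 + |x| := by positivity
    have hx : 0 ≤ (1 + |x|) ^ k := by positivity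
    simp only [abs_mul, abs_of_nonneg hx, pow_succ, abs_of_nonneg hx₁]
    calc (1 + |x|) ^ k * (1 + |x|) * |hermiteFunction n x|
        = (1 + |x|) ^ k * (|hermiteFunction n x| + |x * hermiteFunction n x|) := by
          rw [abs_mul]; ring
      _ ≤ (1 + |x|) ^ k * ((n + 1) * |hermiteFunction n x| +
            (n + 1) * (|hermiteFunction (n - 1) x| + |hermiteFunction (n + 1) x|)) := by
          gcongr
          · exact le_mul_of_one_le_left (abs_nonneg _) (by simp)
          · exact abs_mul_hermiteFunction_le n x
      _ = _ := by ring

theorem hasPolynomialGrowth_pow_mul_iteratedDeriv_hermiteFunction (k m : ℕ) :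
    HasPolynomialGrowth (fun q : ℕ × ℝ => (q.1 : ℝ) + 1) fun q =>
      (1 + |q.2|) ^ k * iteratedDeriv m (hermiteFunction q.1) q.2 := by
  induction m with
  | zero => simpa only [iteratedDeriv_zero] using hasPolynomialGrowth_pow_mul_hermiteFunction k
  | succ m ih =>
    refine ih.of_le_neighbours fun n x => ?_
    have hx : 0 ≤ (1 + |x|) ^ k := by positivity
    simp only [abs_mul, abs_of_nonneg hx]
    calc (1 + |x|) ^ k * |iteratedDeriv (m + 1) (hermiteFunction n) x|
        ≤ (1 + |x|) ^ k * ((n + 1) * (|iteratedDeriv m (hermiteFunction (n - 1)) x| +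
            |iteratedDeriv m (hermiteFunction n) x| +
            |iteratedDeriv m (hermiteFunction (n + 1)) x|)) := by
          gcongr
          refine (abs_iteratedDeriv_succ_hermiteFunction_le m n x).trans ?_
          gcongr
          exact le_add_of_nonneg_right (abs_nonneg _)
      _ = _ := by ring

theorem hermiteFun_eq_hermiteFunction_natPred (n : ℕ+) :
    hermiteFun n = hermiteFunction n.natPred :=
  rfl

theorem hasPolynomialGrowth_seminorm_hermiteTensor {d : ℕ}
    {η : (Fin d → ℕ+) → SchwartzMap (EuclideanSpace ℝ (Fin d)) ℝ}
    (hη : ∀ β x, η β x = hermiteTensor β x) (k n : ℕ) :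
    HasPolynomialGrowth (fun β : Fin d → ℕ+ => ∏ i, ((β i : ℕ) : ℝ)) fun β =>
      SchwartzMap.seminorm ℝ k n (η β) := by
  obtain ⟨C, hC, p, hgrowth⟩ := HasPolynomialGrowth.exists_forall_norm_le
    (s := Finset.range (n + 1)) (fun q : ℕ × ℝ => by simp) fun m _ =>
      hasPolynomialGrowth_pow_mul_iteratedDeriv_hermiteFunction k m
  refine .of_norm_le (C := d ^ n * C ^ d) (p := p) fun β => ?_
  have hfactor (i : Fin d) (m : ℕ) (hm : m ≤ n) (t : ℝ) :
      (1 + |t|) ^ k * ‖iteratedDeriv m (hermiteFunction (β i).natPred) t‖ ≤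
        C * ((β i : ℕ) : ℝ) ^ p := by
    have h := hgrowth m (Finset.mem_range_succ_iff.2 hm) ((β i).natPred, t)
    rwa [norm_mul, norm_of_nonneg (by positivity), ← Nat.cast_succ, Nat.succ_eq_add_one,
      PNat.natPred_add_one] at h
  have hη' : ⇑(η β) = fun x => ∏ i, hermiteFunction (β i).natPred (x i) := by
    ext x
    simp only [hη, hermiteTensor, hermiteFun_eq_hermiteFunction_natPred]
  have hM : (d : ℝ) ^ n * ∏ i, C * ((β i : ℕ) : ℝ) ^ p =
      d ^ n * C ^ d * (∏ i, ((β i : ℕ) : ℝ)) ^ p := by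
    rw [Finset.prod_mul_distrib, Finset.prod_const, Finset.prod_pow, Finset.card_univ,
      Fintype.card_fin, mul_assoc]
  rw [norm_of_nonneg (apply_nonneg _ _), ← hM]
  refine SchwartzMap.seminorm_le_bound ℝ k n _ (by positivity) fun x => ?_
  have h := pow_norm_mul_norm_iteratedFDeriv_prod_coord_le
    (fun i => contDiff_hermiteFunction (β i).natPred) hfactor x
  rwa [Fintype.card_fin, ← hη'] at h

end Hermite

/-- A tempered distribution has Hermite coefficients of at most polynomial growth:
there is a multi-index `θ` with `∑_β T(η_β)² β^{-θ} < ∞`. -/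
theorem tempered_distribution_hermite_coefficients (d : ℕ) (hd : 1 ≤ d)
    (T : SchwartzMap (EuclideanSpace ℝ (Fin d)) ℝ →L[ℝ] ℝ)
    (η : (Fin d → ℕ+) → SchwartzMap (EuclideanSpace ℝ (Fin d)) ℝ)
    (hη : ∀ (β : Fin d → ℕ+) (x : EuclideanSpace ℝ (Fin d)),
      η β x = hermiteTensor β x) :
    ∃ θ : Fin d → ℕ,
      Summable fun β : Fin d → ℕ+ =>
        (T (η β)) ^ 2 * ∏ i, (((β i : ℕ) : ℝ) ^ (θ i))⁻¹ := by
  have hweight (β : Fin d → ℕ+) : 1 ≤ ∏ i, ((β i : ℕ) : ℝ) :=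
    Finset.one_le_prod fun i _ => Nat.one_le_cast.2 (β i).pos
  have hcoeff : HasPolynomialGrowth (fun β => ∏ i, ((β i : ℕ) : ℝ)) fun β => T (η β) :=
    .clm_apply (schwartz_withSeminorms ℝ _ ℝ) hweight
      (fun j => hasPolynomialGrowth_seminorm_hermiteTensor hη j.1 j.2) T
  exact hcoeff.exists_summable_sq_mul_prod_inv_pow
end

section
/- Let d ≥ 1 and let ψ₀ : ℝ^d → ℂ be a Schwartz function. For t > 0 define ψ(x,t) := (4πit)^{−d/2} ∫_{ℝ^d} e^{i|x−y|²/(4t)} ψ₀(y) dy, where (4πit)^{−d/2} is computed using the principal branch of the complex power. Then ψ is smooth on ℝ^d × (0,∞), solves the free Schrödinger equation i ∂ψ/∂t (x,t) + Δ_x ψ(x,t) = 0 for all x ∈ ℝ^d and t > 0, and ψ(x,t) → ψ₀(x) as t → 0⁺ for every x ∈ ℝ^d. (The d-dimensional Schrödinger kernel K_t propagates the initial data.) -/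
/-!
For `t ≠ 0` the evolution is a Fourier multiplier, `ψ(·, t) = 𝓕⁻ (exp (-4π²i t ‖ξ‖²) • 𝓕 ψ₀)`. This
is the `b = 4π²i t` case of the Gaussian multiplier identity, which for `Re b > 0` follows from the
self-adjointness of the Fourier transform and the formula for the transform of a Gaussian. Both of
its sides are continuous in `b` on the closed right half-plane minus the origin: there `π / b` stays
away from the branch cut of the complex power, so the identity persists on the imaginary axis with
the principal branch.

The multiplier side makes sense for every real `t`. It is the Fourier integral, jointly in `(x, t)`,
of the measure with density `𝓕 ψ₀` carried by the paraboloid `s = ‖ξ‖²`. All moments of this measure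
are finite, so the integral is smooth; it is annihilated by `i∂_t + Δ`, whose symbol
`4π²(s - ‖ξ‖²)` vanishes on the paraboloid; and at `t = 0` it is the Fourier inversion formula.
-/

open scoped BigOperators
open MeasureTheory Complex

/-- The partial derivative of `f : ℝ^d → ℂ` in the `i`-th coordinate direction. -/
noncomputable def pderivC {d : ℕ} (f : EuclideanSpace ℝ (Fin d) → ℂ) (i : Fin d)
    (x : EuclideanSpace ℝ (Fin d)) : ℂ :=
  fderiv ℝ f x (EuclideanSpace.single i 1)

/-- The Laplacian `Δf = ∑ᵢ ∂²f/∂xᵢ²` of `f : ℝ^d → ℂ`. -/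
noncomputable def laplacianC {d : ℕ} (f : EuclideanSpace ℝ (Fin d) → ℂ)
    (x : EuclideanSpace ℝ (Fin d)) : ℂ :=
  ∑ i, pderivC (pderivC f i) i x

/-- The free Schrödinger evolution of initial data `ψ₀`,
`ψ(x,t) = (4πit)^{-d/2} ∫ e^{i|x-y|²/(4t)} ψ₀(y) dy` (principal branch of the
complex power). -/
noncomputable def freeSchrodinger {d : ℕ} (ψ₀ : EuclideanSpace ℝ (Fin d) → ℂ)
    (x : EuclideanSpace ℝ (Fin d)) (t : ℝ) : ℂ :=
  (4 * (Real.pi : ℂ) * Complex.I * (t : ℂ)) ^ (-(d : ℂ) / 2) *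
    ∫ y : EuclideanSpace ℝ (Fin d),
      Complex.exp (Complex.I * ((‖x - y‖ ^ 2 : ℝ) : ℂ) / (4 * (t : ℂ))) * ψ₀ y

open VectorFourier (fourierIntegral fourierSMulRight)
open Filter
open scoped FourierTransform InnerProductSpace Topology

/-! ### Fourier integrals of functions with finite moments -/

/-- The moments of `f` of every order are absolutely convergent with respect to `μ`. This makes
Fourier integrals of `f` smooth, with derivatives of all orders taken under the integral sign. The
case `n = 0` is the integrability of `f`, hence includes its measurability. -/
def HasFiniteMoments {V F : Type*} [NormedAddCommGroup V] [MeasurableSpace V]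
    [NormedAddCommGroup F] [NormedSpace ℝ F] (f : V → F) (μ : Measure V) : Prop :=
  ∀ n : ℕ, Integrable (fun v => ‖v‖ ^ n • f v) μ

section Moments

variable {V W F : Type*} [NormedAddCommGroup V] [MeasurableSpace V]
  [NormedAddCommGroup F] {μ : Measure V} {f : V → F}

section Real

variable [NormedSpace ℝ F]

lemma HasFiniteMoments.integrable (hf : HasFiniteMoments f μ) : Integrable f μ := by
  simpa using hf 0

lemma HasFiniteMoments.integrable_pow_mul_norm (hf : HasFiniteMoments f μ) (n : ℕ) :
    Integrable (fun v => ‖v‖ ^ n * ‖f v‖) μ := by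
  simpa [norm_smul] using (hf n).norm

lemma HasFiniteMoments.clm_apply [NormedAddCommGroup W] [NormedSpace ℝ W]
    {T : V → W →L[ℝ] F} (hT : HasFiniteMoments T μ) (w : W) :
    HasFiniteMoments (fun v => T v w) μ :=
  fun n => (hT n).apply_continuousLinearMap w

lemma hasFiniteMoments_schwartzMap [NormedSpace ℝ V] [SecondCountableTopology V] [BorelSpace V]
    (f : SchwartzMap V F) (μ : Measure V) [μ.HasTemperateGrowth] : HasFiniteMoments f μ := by
  intro n
  have hc : Continuous fun v => ‖v‖ ^ n • f v := (continuous_norm.pow n).smul f.continuous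
  exact (integrable_norm_iff hc.aestronglyMeasurable).1 <| by
    simpa [norm_smul] using f.integrable_pow_mul μ n

end Real

variable [NormedSpace ℝ V] [BorelSpace V] [NormedAddCommGroup W] [NormedSpace ℝ W]
  [NormedSpace ℂ F]

lemma fourierIntegral_sum {ι : Type*} [Fintype ι] {g : ι → V → F}
    (L : V →L[ℝ] W →L[ℝ] ℝ) (hg : ∀ i, Integrable (g i) μ) (w : W) :
    fourierIntegral 𝐞 μ L.toLinearMap₁₂ (fun v => ∑ i, g i v) w =
      ∑ i, fourierIntegral 𝐞 μ L.toLinearMap₁₂ (g i) w := by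
  simp only [fourierIntegral, Finset.smul_sum]
  exact integral_finsetSum _ fun i _ => (Real.fourierIntegral_convergent_iff' L w).2 (hg i)

variable [SecondCountableTopology V]

lemma HasFiniteMoments.fourierSMulRight (hf : HasFiniteMoments f μ) (L : V →L[ℝ] W →L[ℝ] ℝ) :
    HasFiniteMoments (fourierSMulRight L f) μ := by
  intro n
  refine ((hf.integrable_pow_mul_norm (n + 1)).const_mul (2 * Real.pi * ‖L‖)).mono' ?_
    (ae_of_all _ fun v => ?_)
  · exact (by fun_prop : Continuous fun v : V => ‖v‖ ^ n).aestronglyMeasurable.smul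
      hf.integrable.1.fourierSMulRight
  · calc ‖‖v‖ ^ n • VectorFourier.fourierSMulRight L f v‖
        = ‖v‖ ^ n * ‖VectorFourier.fourierSMulRight L f v‖ := by simp [norm_smul]
      _ ≤ ‖v‖ ^ n * (2 * Real.pi * ‖L‖ * ‖v‖ * ‖f v‖) := by
        gcongr
        exact VectorFourier.norm_fourierSMulRight_le L f v
      _ = 2 * Real.pi * ‖L‖ * (‖v‖ ^ (n + 1) * ‖f v‖) := by ring

lemma HasFiniteMoments.fderiv_fourierIntegral_apply (hf : HasFiniteMoments f μ)
    (L : V →L[ℝ] W →L[ℝ] ℝ) (w₀ w : W) :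
    fderiv ℝ (fourierIntegral 𝐞 μ L.toLinearMap₁₂ f) w₀ w =
      fourierIntegral 𝐞 μ L.toLinearMap₁₂ (fun v => VectorFourier.fourierSMulRight L f v w) w₀ := by
  rw [VectorFourier.fderiv_fourierIntegral L hf.integrable
      (by simpa using hf.integrable_pow_mul_norm 1),
    Real.fourierIntegral_continuousLinearMap_apply' (hf.fourierSMulRight L).integrable]

end Moments

/-! ### Superpositions of plane waves over the paraboloid -/

section Paraboloid

lemma measurableEmbedding_paraboloid (V : Type*) [NormedAddCommGroup V] [MeasurableSpace V]
    [BorelSpace V] : MeasurableEmbedding fun ξ : V => (ξ, ‖ξ‖ ^ 2) :=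
  (Function.LeftInverse.isClosedEmbedding (f := Prod.fst) (fun _ => rfl) continuous_fst
    (by fun_prop)).measurableEmbedding

variable (V : Type*) [NormedAddCommGroup V] [InnerProductSpace ℝ V]

/-- The bilinear form `L((ξ, s), (x, t)) = 2π s t - ⟪ξ, x⟫`. For `s = ‖ξ‖²`, the function
`exp (-2πi L) = exp (2πi ⟪ξ, x⟫ - 4π²i t ‖ξ‖²)` is a plane wave solving the free Schrödinger
equation. -/
noncomputable def schrodingerPhase : (V × ℝ) →L[ℝ] (V × ℝ) →L[ℝ] ℝ :=
  (2 * Real.pi) • (ContinuousLinearMap.mul ℝ ℝ).bilinearComp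
      (ContinuousLinearMap.snd ℝ V ℝ) (ContinuousLinearMap.snd ℝ V ℝ) -
    (innerSL ℝ).bilinearComp
      (ContinuousLinearMap.fst ℝ _ ℝ) (ContinuousLinearMap.fst ℝ _ ℝ)

variable {V}

lemma schrodingerPhase_apply (v p : V × ℝ) :
    schrodingerPhase V v p = 2 * Real.pi * (v.2 * p.2) - ⟪v.1, p.1⟫_ℝ := by
  simp [schrodingerPhase]

variable {ι F : Type*} [Fintype ι] [NormedAddCommGroup F] [NormedSpace ℂ F]

/-- Since `f ↦ fourierSMulRight L f · w` multiplies by the symbol of `∂_w`, the left-hand side is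
the symbol of `i∂_t + Δ` acting on `f`. -/
lemma schrodinger_symbol (b : OrthonormalBasis ι ℝ V) (f : V × ℝ → F) (v : V × ℝ) :
    I • fourierSMulRight (schrodingerPhase V) f v (0, 1) +
        ∑ i, fourierSMulRight (schrodingerPhase V)
          (fun u => fourierSMulRight (schrodingerPhase V) f u (b i, 0)) v (b i, 0) =
      (4 * Real.pi ^ 2 * (v.2 - ‖v.1‖ ^ 2)) • f v := by
  have htime : I • fourierSMulRight (schrodingerPhase V) f v (0, 1) =
      (4 * Real.pi ^ 2 * v.2) • f v := by
    simp only [VectorFourier.fourierSMulRight_apply, schrodingerPhase_apply, inner_zero_right,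
      ← Complex.coe_smul, smul_smul]
    congr 1
    push_cast
    linear_combination (-4 * Real.pi ^ 2 * v.2 : ℂ) * I_sq
  have hspace (i : ι) : fourierSMulRight (schrodingerPhase V)
      (fun u => fourierSMulRight (schrodingerPhase V) f u (b i, 0)) v (b i, 0) =
      (-(4 * Real.pi ^ 2) * ⟪v.1, b i⟫_ℝ ^ 2) • f v := by
    simp only [VectorFourier.fourierSMulRight_apply, schrodingerPhase_apply, mul_zero,
      ← Complex.coe_smul, smul_smul]
    congr 1
    push_cast
    linear_combination (4 * Real.pi ^ 2 * (⟪v.1, b i⟫_ℝ : ℂ) ^ 2) * I_sq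
  simp only [htime, hspace, ← Finset.sum_smul, ← Finset.mul_sum, b.sum_sq_inner_left]
  module

variable (V) [FiniteDimensional ℝ V] [MeasurableSpace V] [BorelSpace V]

/-- Lebesgue measure on `V` lifted to the paraboloid `{(ξ, s) | s = ‖ξ‖²}` in the frequency space
`V × ℝ`. -/
noncomputable def paraboloidMeasure : Measure (V × ℝ) :=
  (volume : Measure V).map fun ξ => (ξ, ‖ξ‖ ^ 2)

lemma ae_paraboloidMeasure : ∀ᵐ v ∂paraboloidMeasure V, v.2 = ‖v.1‖ ^ 2 := by
  rw [paraboloidMeasure, (measurableEmbedding_paraboloid V).ae_map_iff]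
  simp

variable {V}

lemma HasFiniteMoments.comp_fst {E : Type*} [NormedAddCommGroup E] [NormedSpace ℝ E] {φ : V → E}
    (hφ : HasFiniteMoments φ volume) :
    HasFiniteMoments (fun v : V × ℝ => φ v.1) (paraboloidMeasure V) := by
  intro n
  rw [paraboloidMeasure, (measurableEmbedding_paraboloid V).integrable_map_iff]
  refine ((hφ.integrable_pow_mul_norm n).add (hφ.integrable_pow_mul_norm (2 * n))).mono'
    ((by fun_prop : Continuous fun ξ : V => ‖(ξ, ‖ξ‖ ^ 2)‖ ^ n).aestronglyMeasurable.smul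
      hφ.integrable.1) (ae_of_all _ fun ξ => ?_)
  have hmax : ‖(ξ, ‖ξ‖ ^ 2)‖ ^ n ≤ ‖ξ‖ ^ n + ‖ξ‖ ^ (2 * n) := by
    rw [Prod.norm_mk, norm_pow, norm_norm, pow_mul]
    rcases max_choice ‖ξ‖ (‖ξ‖ ^ 2) with h | h <;> rw [h]
    · exact le_add_of_nonneg_right (by positivity)
    · exact le_add_of_nonneg_left (by positivity)
  calc ‖‖(ξ, ‖ξ‖ ^ 2)‖ ^ n • φ ξ‖ = ‖(ξ, ‖ξ‖ ^ 2)‖ ^ n * ‖φ ξ‖ := by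
        rw [norm_smul, norm_pow, norm_norm]
    _ ≤ (‖ξ‖ ^ n + ‖ξ‖ ^ (2 * n)) * ‖φ ξ‖ := by gcongr
    _ = ‖ξ‖ ^ n * ‖φ ξ‖ + ‖ξ‖ ^ (2 * n) * ‖φ ξ‖ := add_mul _ _ _

/-- The Fourier extension operator of the paraboloid: `paraboloidExtension φ` is the superposition
of the plane waves `exp (2πi ⟪ξ, x⟫ - 4π²i t ‖ξ‖²)` with amplitudes `φ ξ`. Writing it as one
Fourier integral over `V × ℝ` makes it smooth jointly in `(x, t)`. -/
noncomputable def paraboloidExtension (φ : V → F) : V × ℝ → F :=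
  fourierIntegral 𝐞 (paraboloidMeasure V) (schrodingerPhase V).toLinearMap₁₂ fun v => φ v.1

lemma paraboloidExtension_apply (φ : V → F) (x : V) (t : ℝ) :
    paraboloidExtension φ (x, t) =
      𝓕⁻ (fun ξ => cexp (-(4 * Real.pi ^ 2 * t * I) * (‖ξ‖ ^ 2 : ℝ)) • φ ξ) x := by
  rw [paraboloidExtension, fourierIntegral, paraboloidMeasure,
    (measurableEmbedding_paraboloid V).integral_map, Real.fourierInv_eq']
  congr! 2
  rw [Circle.smul_def, Real.fourierChar_apply, smul_smul, ← Complex.exp_add,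
    ContinuousLinearMap.toLinearMap₁₂_apply_apply_apply, schrodingerPhase_apply]
  congr 2
  push_cast
  ring

variable {φ : V → F}

lemma HasFiniteMoments.contDiff_paraboloidExtension (hφ : HasFiniteMoments φ volume) :
    ContDiff ℝ (⊤ : ℕ∞) (paraboloidExtension φ) :=
  VectorFourier.contDiff_fourierIntegral (schrodingerPhase V) fun n _ =>
    hφ.comp_fst.integrable_pow_mul_norm n

lemma HasFiniteMoments.schrodinger_paraboloidExtension (hφ : HasFiniteMoments φ volume)
    (b : OrthonormalBasis ι ℝ V) (p : V × ℝ) :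
    I • fderiv ℝ (paraboloidExtension φ) p (0, 1) +
        ∑ i, fderiv ℝ (fun q => fderiv ℝ (paraboloidExtension φ) q (b i, 0)) p (b i, 0) = 0 := by
  have hf := hφ.comp_fst
  have hf₁ (w : V × ℝ) := (hf.fourierSMulRight (schrodingerPhase V)).clm_apply w
  have hf₂ (w : V × ℝ) := ((hf₁ w).fourierSMulRight (schrodingerPhase V)).clm_apply w
  have htime := (hf₁ (0, 1)).integrable
  have hspace (i : ι) := (hf₂ (b i, 0)).integrable
  have hfderiv (q w : V × ℝ) := hf.fderiv_fourierIntegral_apply (schrodingerPhase V) q w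
  have hfderiv₂ (w : V × ℝ) := (hf₁ w).fderiv_fourierIntegral_apply (schrodingerPhase V) p w
  simp only [paraboloidExtension, hfderiv]
  simp only [hfderiv₂, ← fourierIntegral_sum _ hspace]
  rw [← Pi.smul_apply, ← VectorFourier.fourierIntegral_const_smul, ← Pi.add_apply,
    ← VectorFourier.fourierIntegral_add Real.continuous_fourierChar
      (schrodingerPhase V).continuous₂ (htime.smul I) (integrable_finsetSum _ fun i _ => hspace i)]
  refine (congrFun (VectorFourier.fourierIntegral_congr_ae (f₂ := 0) _ _ _ ?_) p).trans
    (by simp [fourierIntegral])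
  filter_upwards [ae_paraboloidMeasure V] with v hv
  exact (schrodinger_symbol b _ v).trans (by simp [hv])

end Paraboloid

/-! ### Gaussian Fourier multipliers -/

section Gaussian

variable {F : Type*} [NormedAddCommGroup F] [NormedSpace ℂ F]

lemma mem_slitPlane_of_re_nonneg {z : ℂ} (hz : 0 ≤ z.re) (hz₀ : z ≠ 0) : z ∈ slitPlane := by
  rw [mem_slitPlane_iff_not_le_zero, Complex.le_def]
  exact fun h => hz₀ (Complex.ext (h.1.antisymm hz) h.2)

lemma re_ofReal_div_nonneg {r : ℝ} (hr : 0 ≤ r) {z : ℂ} (hz : 0 ≤ z.re) : 0 ≤ (r / z : ℂ).re := by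
  simpa [div_re] using div_nonneg (mul_nonneg hr hz) (normSq_nonneg z)

lemma continuousOn_integral_cexp_neg_mul_smul {α : Type*} [MeasurableSpace α] {μ : Measure α}
    {r : α → ℝ} (hr : Measurable r) (hr₀ : ∀ a, 0 ≤ r a) {g : α → F} (hg : Integrable g μ) :
    ContinuousOn (fun c : ℂ => ∫ a, cexp (-c * r a) • g a ∂μ) {c | 0 ≤ c.re} := by
  refine continuousOn_of_dominated (bound := fun a => ‖g a‖) (fun c _ => ?_)
    (fun c hc => ae_of_all _ fun a => ?_) hg.norm (ae_of_all _ fun a => by fun_prop)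
  · exact (by fun_prop : Measurable fun a => cexp (-c * r a)).aestronglyMeasurable.smul hg.1
  · have hexp : ‖cexp (-c * r a)‖ ≤ 1 := by
      simpa [Complex.norm_exp] using mul_nonneg hc (hr₀ a)
    simpa [norm_smul] using mul_le_of_le_one_left (norm_nonneg (g a)) hexp

variable {V : Type*} [NormedAddCommGroup V] [InnerProductSpace ℝ V] [FiniteDimensional ℝ V]
  [MeasurableSpace V] [BorelSpace V] {f : V → F} {b : ℂ}

lemma fourierInv_gaussian_smul_fourier_of_re_pos [CompleteSpace F] (hf : Integrable f)
    (hb : 0 < b.re) (x : V) :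
    𝓕⁻ (fun ξ => cexp (-b * (‖ξ‖ ^ 2 : ℝ)) • 𝓕 f ξ) x =
      (Real.pi / b) ^ (Module.finrank ℝ V / 2 : ℂ) •
        ∫ y, cexp (-(Real.pi ^ 2 / b) * (‖x - y‖ ^ 2 : ℝ)) • f y := by
  set G : V → ℂ := fun ξ => cexp (-b * ‖ξ‖ ^ 2 + 2 * Real.pi * I * ⟪x, ξ⟫_ℝ) with hG
  have hGint : Integrable G := GaussianFourier.integrable_cexp_neg_mul_sq_norm_add hb _ _
  have hselfadj : ∫ y, 𝓕 G y • f y = ∫ ξ, G ξ • 𝓕 f ξ := by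
    simpa using! VectorFourier.integral_fourierIntegral_smul_eq_flip (L := innerₗ V)
      Real.continuous_fourierChar continuous_inner hGint hf
  calc 𝓕⁻ (fun ξ => cexp (-b * (‖ξ‖ ^ 2 : ℝ)) • 𝓕 f ξ) x = ∫ ξ, G ξ • 𝓕 f ξ := by
        rw [Real.fourierInv_eq']
        congr! 2 with ξ
        rw [smul_smul, ← Complex.exp_add, hG, real_inner_comm]
        congr 2
        push_cast
        ring
    _ = ∫ y, 𝓕 G y • f y := hselfadj.symm
    _ = _ := by
        rw [← integral_smul]
        congr! 2 with y
        rw [hG, fourier_gaussian_innerProductSpace' hb, smul_smul]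
        congr 3
        push_cast
        ring

lemma fourierInv_gaussian_smul_fourier [CompleteSpace F] (hf : Integrable f)
    (hf' : Integrable (𝓕 f)) (hb : 0 ≤ b.re) (hb₀ : b ≠ 0) (x : V) :
    𝓕⁻ (fun ξ => cexp (-b * (‖ξ‖ ^ 2 : ℝ)) • 𝓕 f ξ) x =
      (Real.pi / b) ^ (Module.finrank ℝ V / 2 : ℂ) •
        ∫ y, cexp (-(Real.pi ^ 2 / b) * (‖x - y‖ ^ 2 : ℝ)) • f y := by
  have hdense : {b : ℂ | 0 ≤ b.re ∧ b ≠ 0} ⊆ closure {b | 0 < b.re} := by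
    rw [Complex.closure_setOfPred_lt_re]
    exact fun b hb => hb.1
  have hdiv (r : ℝ) : ContinuousOn (fun b : ℂ => r / b) {b | 0 ≤ b.re ∧ b ≠ 0} :=
    continuousOn_const.div continuousOn_id fun b hb => hb.2
  refine Set.EqOn.of_subset_closure (s := {b : ℂ | 0 < b.re}) (t := {b : ℂ | 0 ≤ b.re ∧ b ≠ 0})
    (fun b hb => fourierInv_gaussian_smul_fourier_of_re_pos hf hb x) ?_ ?_
    (fun b hb => ⟨le_of_lt hb, fun h => by simp [h] at hb⟩) hdense ⟨hb, hb₀⟩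
  · have hint : Integrable fun ξ => 𝐞 ⟪ξ, x⟫_ℝ • 𝓕 f ξ := by
      simpa using (Real.fourierIntegral_convergent_iff (-x)).2 hf'
    simp only [Real.fourierInv_eq, smul_comm (𝐞 _)]
    exact (continuousOn_integral_cexp_neg_mul_smul (by fun_prop) (fun ξ => by positivity)
      hint).mono fun b hb => hb.1
  · refine ((hdiv Real.pi).cpow_const fun b hb => ?_).smul ?_
    · exact mem_slitPlane_of_re_nonneg (re_ofReal_div_nonneg Real.pi_pos.le hb.1)
        (div_ne_zero (by exact_mod_cast Real.pi_ne_zero) hb.2)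
    · have hpow := hdiv (Real.pi ^ 2)
      push_cast at hpow
      exact (continuousOn_integral_cexp_neg_mul_smul (by fun_prop) (fun y => by positivity)
        hf).comp hpow fun b hb => by
          simpa using re_ofReal_div_nonneg (sq_nonneg Real.pi) hb.1

end Gaussian

/-! ### The free Schrödinger evolution -/

section Evolution

variable {d : ℕ}

lemma deriv_slice {V F : Type*} [NormedAddCommGroup V] [NormedSpace ℝ V] [NormedAddCommGroup F]
    [NormedSpace ℝ F] {u : V × ℝ → F} {x : V} {t : ℝ} (hu : DifferentiableAt ℝ u (x, t)) :
    deriv (fun s => u (x, s)) t = fderiv ℝ u (x, t) (0, 1) :=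
  (hu.hasFDerivAt.comp_hasDerivAt t ((hasDerivAt_const t x).prodMk (hasDerivAt_id t))).deriv

lemma pderivC_slice {u : EuclideanSpace ℝ (Fin d) × ℝ → ℂ} {x : EuclideanSpace ℝ (Fin d)} {t : ℝ}
    (hu : DifferentiableAt ℝ u (x, t)) (i : Fin d) :
    pderivC (fun y => u (y, t)) i x = fderiv ℝ u (x, t) (EuclideanSpace.single i 1, 0) := by
  have hslice : HasFDerivAt (fun y => u (y, t)) _ x :=
    hu.hasFDerivAt.comp (f := fun y => (y, t)) x (hasFDerivAt_prodMk_left x t)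
  rw [pderivC, hslice.fderiv]
  rfl

lemma laplacianC_slice {u : EuclideanSpace ℝ (Fin d) × ℝ → ℂ} (hu : ContDiff ℝ 2 u)
    (x : EuclideanSpace ℝ (Fin d)) (t : ℝ) :
    laplacianC (fun y => u (y, t)) x =
      ∑ i, fderiv ℝ (fun q => fderiv ℝ u q (EuclideanSpace.single i 1, 0)) (x, t)
        (EuclideanSpace.single i 1, 0) := by
  have hu₁ : Differentiable ℝ u := hu.differentiable (by simp)
  have hu₂ : Differentiable ℝ (fderiv ℝ u) :=
    (hu.fderiv_right (m := 1) (by norm_num)).differentiable (by simp)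
  refine Finset.sum_congr rfl fun i _ => ?_
  rw [funext fun y => pderivC_slice (hu₁ (y, t)) i]
  exact pderivC_slice ((hu₂ _).clm_apply (differentiableAt_const _)) i

variable {ψ₀ : EuclideanSpace ℝ (Fin d) → ℂ}

lemma freeSchrodinger_eq_paraboloidExtension (hψ₀ : Integrable ψ₀) (hψ₀' : Integrable (𝓕 ψ₀))
    (x : EuclideanSpace ℝ (Fin d)) {t : ℝ} (ht : t ≠ 0) :
    freeSchrodinger ψ₀ x t = paraboloidExtension (𝓕 ψ₀) (x, t) := by
  have hπ : (Real.pi : ℂ) ≠ 0 := by exact_mod_cast Real.pi_ne_zero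
  have ht' : (t : ℂ) ≠ 0 := by exact_mod_cast ht
  have hbase : Real.pi / (4 * Real.pi ^ 2 * t * I) = (4 * Real.pi * I * t)⁻¹ := by
    field_simp
  have harg : (4 * Real.pi * I * t : ℂ).arg ≠ Real.pi := by
    intro h
    have := (arg_eq_pi_iff.1 h).2
    simp [ht] at this
  rw [paraboloidExtension_apply, fourierInv_gaussian_smul_fourier hψ₀ hψ₀' (by simp [← ofReal_pow])
    (by simp [hπ, ht']), finrank_euclideanSpace_fin, hbase, inv_cpow _ _ harg, ← cpow_neg,
    freeSchrodinger, smul_eq_mul, neg_div]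
  congr! 5 with y
  field_simp
  rw [I_sq, neg_one_mul, ofReal_pow]

theorem schrodinger_kernel_propagates_general (hψ₀ : Integrable ψ₀)
    (hmom : HasFiniteMoments (𝓕 ψ₀) volume) :
    ContDiffOn ℝ (⊤ : ℕ∞) (fun p : EuclideanSpace ℝ (Fin d) × ℝ => freeSchrodinger ψ₀ p.1 p.2)
        (Set.univ ×ˢ {0}ᶜ) ∧
      (∀ x t, t ≠ 0 →
        I * deriv (fun s => freeSchrodinger ψ₀ x s) t +
          laplacianC (fun y => freeSchrodinger ψ₀ y t) x = 0) ∧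
      ∀ x, ContinuousAt ψ₀ x →
        Tendsto (fun t => freeSchrodinger ψ₀ x t) (𝓝[≠] 0) (𝓝 (ψ₀ x)) := by
  have hrep (x) {t : ℝ} (ht : t ≠ 0) :=
    freeSchrodinger_eq_paraboloidExtension hψ₀ hmom.integrable x ht
  have hsmooth := hmom.contDiff_paraboloidExtension
  refine ⟨hsmooth.contDiffOn.congr fun p hp => hrep p.1 hp.2, fun x t ht => ?_, fun x hx => ?_⟩
  · have hnear : (fun s => freeSchrodinger ψ₀ x s) =ᶠ[𝓝 t]
        fun s => paraboloidExtension (𝓕 ψ₀) (x, s) := by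
      filter_upwards [isOpen_ne.mem_nhds ht] with s hs using hrep x hs
    rw [hnear.deriv_eq, deriv_slice (hsmooth.differentiable (by simp) _),
      funext fun y => hrep y ht, laplacianC_slice (hsmooth.of_le (WithTop.coe_le_coe.2 le_top))]
    simpa using hmom.schrodinger_paraboloidExtension (EuclideanSpace.basisFun (Fin d) ℝ) (x, t)
  · have hzero : paraboloidExtension (𝓕 ψ₀) (x, 0) = ψ₀ x := by
      simpa [paraboloidExtension_apply] using! hψ₀.fourierInv_fourier_eq hmom.integrable hx
    have hcont : Continuous fun t : ℝ => paraboloidExtension (𝓕 ψ₀) (x, t) :=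
      hsmooth.continuous.comp (by fun_prop)
    rw [← hzero]
    refine ((hcont.tendsto 0).mono_left nhdsWithin_le_nhds).congr' ?_
    filter_upwards [self_mem_nhdsWithin] with t ht using (hrep x ht).symm

end Evolution

/-- The Schrödinger kernel propagates Schwartz initial data: the resulting wave
function is smooth for `t > 0`, solves the free Schrödinger equation, and
attains the initial data as `t → 0⁺`. -/
theorem schrodinger_kernel_propagates (d : ℕ) (hd : 1 ≤ d)
    (ψ₀ : SchwartzMap (EuclideanSpace ℝ (Fin d)) ℂ)
    (ψ : EuclideanSpace ℝ (Fin d) → ℝ → ℂ)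
    (hψ : ∀ x t, ψ x t = freeSchrodinger (fun y => ψ₀ y) x t) :
    ContDiffOn ℝ (⊤ : ℕ∞) (fun p : EuclideanSpace ℝ (Fin d) × ℝ => ψ p.1 p.2)
        (Set.univ ×ˢ Set.Ioi (0 : ℝ)) ∧
      (∀ (x : EuclideanSpace ℝ (Fin d)) (t : ℝ), 0 < t →
        Complex.I * deriv (fun s => ψ x s) t + laplacianC (fun y => ψ y t) x = 0) ∧
      ∀ x : EuclideanSpace ℝ (Fin d),
        Filter.Tendsto (fun t => ψ x t) (nhdsWithin 0 (Set.Ioi 0)) (nhds (ψ₀ x)) := by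
  obtain rfl : ψ = freeSchrodinger ψ₀ := funext₂ hψ
  obtain ⟨hsmooth, heq, hlim⟩ := schrodinger_kernel_propagates_general ψ₀.integrable
    (hasFiniteMoments_schwartzMap (𝓕 ψ₀) volume)
  exact ⟨hsmooth.mono (Set.prod_mono_right fun t ht => ht.ne'), fun x t ht => heq x t ht.ne',
    fun x => (hlim x ψ₀.continuous.continuousAt).mono_left
      (nhdsWithin_mono 0 fun t ht => ht.ne')⟩
end
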